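/- For the full shift T on X = ∏_{n∈ℤ} M over a perfect Polish metric space M, the set HD = {μ ∈ M(T) : d̲_μ(x) = 0 for μ-a.e. x ∈ X} (equivalently, the set of μ with Hausdorff dimension dim_H(μ) = 0) is a dense Gδ subset of M(T). -/

import Mathlib

open Filter MeasureTheory Topology Metric Set
open scoped ENNReal NNReal

noncomputable section
attribute [local instance] Classical.propDecidable

/-- The full (bilateral) shift on the product space `ℤ → M`: `(T x) i = x (i - 1)`. -/
def fullShift {M : Type*} (x : ℤ → M) : ℤ → M := fun i => x (i - 1)

/-- The metric `d(x,y) = ∑_{n ∈ ℤ} 2^{-|n|} ρ(xₙ,yₙ)/(1 + ρ(xₙ,yₙ))` on `ℤ → M`,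
compatible with the product topology. -/
def shiftDist {M : Type*} [MetricSpace M] (x y : ℤ → M) : ℝ :=
  ∑' n : ℤ, (1 / 2 : ℝ) ^ n.natAbs * (dist (x n) (y n) / (1 + dist (x n) (y n)))

/-- Lower local dimension `d̲_μ(x) = liminf_{ε → 0⁺} log μ(B(x,ε)) / log ε` of `μ` at `x`,
with respect to the distance function `d`; by convention it is `∞` if some ball
centered at `x` has measure zero. -/
def lowerLocalDim {X : Type*} [MeasurableSpace X] (d : X → X → ℝ)
    (μ : Measure X) (x : X) : ℝ≥0∞ :=
  if ∃ ε > 0, μ {y | d x y < ε} = 0 then ⊤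
  else liminf (fun ε : ℝ =>
    ENNReal.ofReal (Real.log (μ {y | d x y < ε}).toReal / Real.log ε)) (𝓝[>] (0 : ℝ))

/-- Upper local dimension `d̄_μ(x) = limsup_{ε → 0⁺} log μ(B(x,ε)) / log ε`. -/
def upperLocalDim {X : Type*} [MeasurableSpace X] (d : X → X → ℝ)
    (μ : Measure X) (x : X) : ℝ≥0∞ :=
  if ∃ ε > 0, μ {y | d x y < ε} = 0 then ⊤
  else limsup (fun ε : ℝ =>
    ENNReal.ofReal (Real.log (μ {y | d x y < ε}).toReal / Real.log ε)) (𝓝[>] (0 : ℝ))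

/-- The ratio `log τ_r(x) / (- log r)`, where `τ_r(x) = inf {n ≥ 1 | Tⁿ x ∈ B̄(x,r)}` is the
first return time of `x` to the closed ball `B̄(x,r)`; by convention it is `∞` when the
return time is infinite. -/
def recRatio {X : Type*} (d : X → X → ℝ) (T : X → X) (x : X) (r : ℝ) : ℝ≥0∞ :=
  if ∃ n : ℕ, 1 ≤ n ∧ d (T^[n] x) x ≤ r then
    ENNReal.ofReal
      (Real.log ((sInf {n : ℕ | 1 ≤ n ∧ d (T^[n] x) x ≤ r} : ℕ) : ℝ) / (- Real.log r))
  else ⊤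

/-- Lower recurrence rate `R̲(x) = liminf_{r → 0⁺} log τ_r(x) / (- log r)`. -/
def lowerRecRate {X : Type*} (d : X → X → ℝ) (T : X → X) (x : X) : ℝ≥0∞ :=
  liminf (recRatio d T x) (𝓝[>] (0 : ℝ))

/-- Upper recurrence rate `R̄(x) = limsup_{r → 0⁺} log τ_r(x) / (- log r)`. -/
def upperRecRate {X : Type*} (d : X → X → ℝ) (T : X → X) (x : X) : ℝ≥0∞ :=
  limsup (recRatio d T x) (𝓝[>] (0 : ℝ))

/-- The ratio `log τ_r(x,y) / (- log r)`, where `τ_r(x,y) = inf {n ≥ 1 | Tⁿ x ∈ B̄(y,r)}` is the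
first entrance time of the orbit of `x` into the closed ball `B̄(y,r)`; by convention `∞`
when the entrance time is infinite. -/
def waitRatio {X : Type*} (d : X → X → ℝ) (T : X → X) (x y : X) (r : ℝ) : ℝ≥0∞ :=
  if ∃ n : ℕ, 1 ≤ n ∧ d (T^[n] x) y ≤ r then
    ENNReal.ofReal
      (Real.log ((sInf {n : ℕ | 1 ≤ n ∧ d (T^[n] x) y ≤ r} : ℕ) : ℝ) / (- Real.log r))
  else ⊤

/-- Lower quantitative waiting time indicator `R̲(x,y)`. -/
def lowerWaitRate {X : Type*} (d : X → X → ℝ) (T : X → X) (x y : X) : ℝ≥0∞ :=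
  liminf (waitRatio d T x y) (𝓝[>] (0 : ℝ))

/-- Upper quantitative waiting time indicator `R̄(x,y)`. -/
def upperWaitRate {X : Type*} (d : X → X → ℝ) (T : X → X) (x y : X) : ℝ≥0∞ :=
  limsup (waitRatio d T x y) (𝓝[>] (0 : ℝ))

/-- The entropy `H(P) = ∑_c -μ(P_c) log μ(P_c)` of the finite measurable partition
`P_c = f ⁻¹ {c}` of `X` induced by a map `f` into a finite set. -/
def partitionEntropy {X F : Type*} [MeasurableSpace X] [Fintype F]
    (μ : Measure X) (f : X → F) : ℝ :=
  ∑ c : F, Real.negMulLog ((μ (f ⁻¹' {c})).toReal)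

/-- The Kolmogorov–Sinai (measure-theoretic) entropy `h_μ(T)`: the supremum, over all finite
measurable partitions (coded by measurable maps `f : X → Fin k`), of the limit of
`H(⋁_{i<n} T⁻ⁱ P) / n`. -/
def kolmogorovSinaiEntropy {X : Type*} [MeasurableSpace X] (T : X → X) (μ : Measure X) :
    ℝ≥0∞ :=
  ⨆ (k : ℕ) (f : X → Fin k) (_ : Measurable f),
    ENNReal.ofReal
      (liminf (fun n : ℕ =>
        partitionEntropy μ (fun x (i : Fin n) => f (T^[(i : ℕ)] x)) / n) atTop)

end

/- Semicontinuity makes `HD` a `Gδ` set: for open `W ⊆ Y × X`, the measure `μ (W_y)` of a section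
is jointly lower semicontinuous in `(μ, y)`. Applied to `{(x, y) | d x y < ε}`, this shows that the
pairs `(μ, x)` for which some small ball around `x` has measure larger than `ε ^ s` form an open
set; applied to that set, it shows that having full measure of such points is a `Gδ` condition on
`μ`.

For density, quantize the alphabet by a map with countable range and repeat the window `[-a, b]` of
a point periodically. Pushing an invariant measure `μ` forward and averaging over the windows with
`a + b = n`, which the shift permutes cyclically, yields an invariant measure carried by a countable
set, whose local dimension therefore vanishes almost everywhere. For most windows of a given length
both `a` and `b` are large, so these averages converge to `μ`. -/

open Finset.HasAntidiagonal (antidiagonal mem_antidiagonal)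

section ShiftDist

theorem div_one_add_le_one {t : ℝ} (ht : 0 ≤ t) : t / (1 + t) ≤ 1 :=
  div_le_one_of_le₀ (by linarith) (by linarith)

theorem summable_half_pow_natAbs : Summable fun n : ℤ => (1 / 2 : ℝ) ^ n.natAbs :=
  .of_nat_of_neg (by simpa using summable_geometric_two) (by simpa using summable_geometric_two)

variable {M : Type*} [MetricSpace M]

theorem shiftDist_self (x : ℤ → M) : shiftDist x x = 0 := by simp [shiftDist]

theorem continuous_uncurry_shiftDist :
    Continuous (Function.uncurry (shiftDist : (ℤ → M) → (ℤ → M) → ℝ)) := by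
  refine continuous_tsum (fun n => ?_) summable_half_pow_natAbs fun n p => ?_
  · have hdist : Continuous fun p : (ℤ → M) × (ℤ → M) => dist (p.1 n) (p.2 n) := by fun_prop
    exact continuous_const.mul (hdist.div (continuous_const.add hdist) fun p => by positivity)
  · rw [Real.norm_of_nonneg (by positivity)]
    exact mul_le_of_le_one_right (by positivity) (div_one_add_le_one dist_nonneg)

end ShiftDist

section LocalDimension

theorem log_toReal_div_log_lt_iff {m : ℝ≥0∞} (hm₀ : m ≠ 0) (hm : m ≠ ⊤) {ε : ℝ} (hε₀ : 0 < ε)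
    (hε₁ : ε < 1) {s : ℝ} :
    Real.log m.toReal / Real.log ε < s ↔ ENNReal.ofReal (ε ^ s) < m := by
  rw [ENNReal.ofReal_lt_iff_lt_toReal (by positivity) hm,
    div_lt_iff_of_neg (Real.log_neg hε₀ hε₁), ← Real.log_rpow hε₀,
    Real.log_lt_log_iff (by positivity) (ENNReal.toReal_pos hm₀ hm)]

variable {X : Type*} [MeasurableSpace X] {d : X → X → ℝ} {μ : Measure X}

theorem frequently_rpow_lt_measure_of_lowerLocalDim_eq_zero [IsFiniteMeasure μ] {x : X}
    (h : lowerLocalDim d μ x = 0) {s : ℝ} (hs : 0 < s) :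
    ∃ᶠ ε in 𝓝[>] (0 : ℝ), ENNReal.ofReal (ε ^ s) < μ {y | d x y < ε} := by
  unfold lowerLocalDim at h
  split_ifs at h with hnull
  · exact absurd h ENNReal.top_ne_zero
  push Not at hnull
  have hratio := frequently_lt_of_liminf_lt (by isBoundedDefault)
    (h.trans_lt (ENNReal.ofReal_pos.2 hs))
  refine (hratio.and_eventually (Ioo_mem_nhdsGT one_pos)).mono fun ε hε => ?_
  exact (log_toReal_div_log_lt_iff (hnull ε hε.2.1) (measure_ne_top _ _) hε.2.1 hε.2.2).1
    ((ENNReal.ofReal_lt_ofReal_iff hs).1 hε.1)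

theorem measure_ball_ne_zero_of_frequently_rpow_lt {x : X} {s : ℝ}
    (h : ∃ᶠ ε in 𝓝[>] (0 : ℝ), ENNReal.ofReal (ε ^ s) < μ {y | d x y < ε}) {ε : ℝ} (hε : 0 < ε) :
    μ {y | d x y < ε} ≠ 0 := by
  obtain ⟨ε', hlt, hε'⟩ := (h.and_eventually (Ioo_mem_nhdsGT hε)).exists
  exact ((pos_of_gt hlt).trans_le (measure_mono fun y hy => lt_trans hy hε'.2)).ne'

theorem lowerLocalDim_le_of_frequently_rpow_lt [IsFiniteMeasure μ] {x : X} {s : ℝ}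
    (h : ∃ᶠ ε in 𝓝[>] (0 : ℝ), ENNReal.ofReal (ε ^ s) < μ {y | d x y < ε}) :
    lowerLocalDim d μ x ≤ ENNReal.ofReal s := by
  have hball {ε : ℝ} (hε : 0 < ε) := measure_ball_ne_zero_of_frequently_rpow_lt h hε
  unfold lowerLocalDim
  rw [if_neg fun ⟨ε, hε, hnull⟩ => hball hε hnull]
  refine liminf_le_of_frequently_le' ?_
  refine (h.and_eventually (Ioo_mem_nhdsGT one_pos)).mono fun ε hε => ?_
  exact ENNReal.ofReal_le_ofReal
    ((log_toReal_div_log_lt_iff (hball hε.2.1) (measure_ne_top _ _) hε.2.1 hε.2.2).2 hε.1).le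

theorem lowerLocalDim_eq_zero_iff_frequently [IsFiniteMeasure μ] {x : X} :
    lowerLocalDim d μ x = 0 ↔
      ∀ s > (0 : ℝ), ∃ᶠ ε in 𝓝[>] (0 : ℝ), ENNReal.ofReal (ε ^ s) < μ {y | d x y < ε} := by
  refine ⟨fun h s hs => frequently_rpow_lt_measure_of_lowerLocalDim_eq_zero h hs, fun h => ?_⟩
  refine le_antisymm (ENNReal.le_of_forall_pos_le_add fun s hs _ => ?_) zero_le
  simpa using lowerLocalDim_le_of_frequently_rpow_lt (h s hs)

/-- The points having, at some scale `ε < s`, a ball of measure larger than `ε ^ s`. Using `s` both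
as the exponent and as the bound on the scale makes one sequence `s → 0` detect the vanishing of the
lower local dimension. -/
def largeBallSet (d : X → X → ℝ) (μ : Measure X) (s : ℝ) : Set X :=
  {x | ∃ ε ∈ Ioo 0 s, ENNReal.ofReal (ε ^ s) < μ {y | d x y < ε}}

theorem lowerLocalDim_eq_zero_iff_mem_largeBallSet [IsFiniteMeasure μ] {x : X} :
    lowerLocalDim d μ x = 0 ↔ ∀ k : ℕ, x ∈ largeBallSet d μ (1 / (k + 1)) := by
  rw [lowerLocalDim_eq_zero_iff_frequently]
  refine ⟨fun h k => ?_, fun h s hs => (nhdsGT_basis 0).frequently_iff.2 fun δ hδ => ?_⟩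
  · have hk : (0 : ℝ) < 1 / (k + 1) := Nat.one_div_pos_of_nat
    exact (nhdsGT_basis 0).frequently_iff.1 (h _ hk) _ hk
  · obtain ⟨k, hk⟩ := exists_nat_one_div_lt (lt_min (lt_min hs hδ) one_pos)
    obtain ⟨hkmin, hk₁⟩ := lt_min_iff.1 hk
    obtain ⟨hks, hkδ⟩ := lt_min_iff.1 hkmin
    obtain ⟨ε, ⟨hε, hεk⟩, hlt⟩ := h k
    refine ⟨ε, ⟨hε, hεk.trans hkδ⟩, lt_of_le_of_lt (ENNReal.ofReal_le_ofReal ?_) hlt⟩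
    exact Real.rpow_le_rpow_of_exponent_ge hε (hεk.trans hk₁).le hks.le

theorem lowerLocalDim_eq_zero_of_measure_singleton_ne_zero [IsFiniteMeasure μ] {x : X}
    (hd : d x x = 0) (hx : μ {x} ≠ 0) : lowerLocalDim d μ x = 0 := by
  rw [lowerLocalDim_eq_zero_iff_frequently]
  intro s hs
  have hpow : Tendsto (fun ε : ℝ => ENNReal.ofReal (ε ^ s)) (𝓝[>] 0) (𝓝 0) := by
    have hcont : Continuous fun ε : ℝ => ENNReal.ofReal (ε ^ s) :=
      ENNReal.continuous_ofReal.comp (Real.continuous_rpow_const hs.le)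
    simpa [Real.zero_rpow hs.ne'] using (hcont.tendsto 0).mono_left nhdsWithin_le_nhds
  refine Eventually.frequently ?_
  filter_upwards [hpow.eventually_lt_const (pos_iff_ne_zero.2 hx), self_mem_nhdsWithin]
    with ε hlt hε
  exact hlt.trans_le (measure_mono (singleton_subset_iff.2 (hd.trans_lt hε)))

theorem ae_lowerLocalDim_eq_zero_of_countable [IsFiniteMeasure μ] (hd : ∀ x, d x x = 0)
    {S : Set X} (hS : S.Countable) (hμS : ∀ᵐ x ∂μ, x ∈ S) :
    ∀ᵐ x ∂μ, lowerLocalDim d μ x = 0 := by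
  have hnull : μ {x ∈ S | μ {x} = 0} = 0 := by
    rw [← biUnion_of_singleton {x ∈ S | μ {x} = 0},
      measure_biUnion_null_iff (hS.mono (sep_subset _ _))]
    exact fun x hx => hx.2
  filter_upwards [hμS, measure_eq_zero_iff_ae_notMem.1 hnull] with x hxS hx
  exact lowerLocalDim_eq_zero_of_measure_singleton_ne_zero (hd x) fun h => hx ⟨hxS, h⟩

end LocalDimension

section Semicontinuity

theorem isGδ_preimage_Ici_of_lowerSemicontinuous {Z γ : Type*} [TopologicalSpace Z]
    [LinearOrder γ] [DenselyOrdered γ] [TopologicalSpace γ] [OrderTopology γ]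
    [TopologicalSpace.SeparableSpace γ] {f : Z → γ} (hf : LowerSemicontinuous f) (a : γ) :
    IsGδ (f ⁻¹' Ici a) := by
  obtain ⟨D, hDc, hD⟩ := TopologicalSpace.exists_countable_dense γ
  have heq : f ⁻¹' Ici a = ⋂ b ∈ D ∩ Iio a, f ⁻¹' Ioi b := by
    ext z
    simp only [mem_preimage, mem_Ici, mem_iInter, mem_Ioi]
    refine ⟨fun h b hb => lt_of_lt_of_le hb.2 h, fun h => le_of_forall_lt fun c hc => ?_⟩
    obtain ⟨b, hbD, hcb, hba⟩ := hD.exists_between hc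
    exact hcb.trans (h b ⟨hbD, hba⟩)
  rw [heq]
  exact .biInter (hDc.mono inter_subset_left) fun b _ => (hf.isOpen_preimage b).isGδ

variable {X : Type*} [TopologicalSpace X] [MeasurableSpace X]

theorem exists_finset_lt_measure_biUnion [SecondCountableTopology X] {ι : Type*} {V : ι → Set X}
    (hV : ∀ i, IsOpen (V i)) {μ : Measure X} {c : ℝ≥0∞} (hc : c < μ (⋃ i, V i)) :
    ∃ F : Finset ι, c < μ (⋃ i ∈ F, V i) := by
  classical
  obtain ⟨T, hT, hTV⟩ := TopologicalSpace.isOpen_iUnion_countable V hV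
  have := hT.to_subtype
  have hdir : Directed (· ⊆ ·) fun F : Finset T => ⋃ i ∈ F, V i :=
    Monotone.directed_le fun F F' hFF' => biUnion_subset_biUnion_left hFF'
  rw [← hTV, biUnion_eq_iUnion, iUnion_eq_iUnion_finset, hdir.measure_iUnion, lt_iSup_iff] at hc
  obtain ⟨F, hF⟩ := hc
  exact ⟨F.map (Function.Embedding.subtype _), by simpa using hF⟩

variable [OpensMeasurableSpace X] [HasOuterApproxClosed X]

theorem lowerSemicontinuous_measure_of_isOpen {U : Set X} (hU : IsOpen U) :
    LowerSemicontinuous fun μ : ProbabilityMeasure X => (μ : Measure X) U := fun _ _ hc =>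
  eventually_lt_of_lt_liminf
    (hc.trans_le (ProbabilityMeasure.le_liminf_measure_open_of_tendsto tendsto_id hU))

variable [SecondCountableTopology X]

theorem lowerSemicontinuous_measure_prodMk_preimage {Y : Type*} [TopologicalSpace Y]
    {W : Set (Y × X)} (hW : IsOpen W) :
    LowerSemicontinuous fun p : ProbabilityMeasure X × Y =>
      (p.1 : Measure X) (Prod.mk p.2 ⁻¹' W) := by
  rintro ⟨μ, y⟩ c hc
  choose U V hU hV hyU hxV hUVW using
    fun x : Prod.mk y ⁻¹' W => isOpen_prod_iff.1 hW y x x.2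
  have hcover : Prod.mk y ⁻¹' W ⊆ ⋃ x, V x := fun x hx => mem_iUnion.2 ⟨⟨x, hx⟩, hxV _⟩
  obtain ⟨F, hF⟩ := exists_finset_lt_measure_biUnion hV (hc.trans_le (measure_mono hcover))
  have hμF : ∀ᶠ ν : ProbabilityMeasure X in 𝓝 μ, c < (ν : Measure X) (⋃ x ∈ F, V x) :=
    lowerSemicontinuous_measure_of_isOpen (isOpen_biUnion fun x _ => hV x) μ c hF
  have hyF : ∀ᶠ z in 𝓝 y, ∀ x ∈ F, z ∈ U x :=
    F.eventually_all.2 fun x _ => (hU x).mem_nhds (hyU x)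
  filter_upwards [hμF.prod_nhds hyF] with p hp
  exact hp.1.trans_le (measure_mono (iUnion₂_subset fun x hx z hz => hUVW x ⟨hp.2 x hx, hz⟩))

theorem isGδ_setOf_ae_prodMk_mem {W : Set (ProbabilityMeasure X × X)} (hW : IsOpen W) :
    IsGδ {μ : ProbabilityMeasure X | ∀ᵐ x ∂(μ : Measure X), (μ, x) ∈ W} := by
  have hlsc : LowerSemicontinuous fun μ : ProbabilityMeasure X =>
      (μ : Measure X) (Prod.mk μ ⁻¹' W) :=
    (lowerSemicontinuous_measure_prodMk_preimage hW).comp (continuous_id.prodMk continuous_id)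
  convert isGδ_preimage_Ici_of_lowerSemicontinuous hlsc 1 using 1
  ext μ
  exact (mem_ae_iff_prob_eq_one (hW.preimage (.prodMk_right μ)).measurableSet).trans
    prob_le_one.ge_iff_eq.symm

theorem isOpen_setOf_mem_largeBallSet {d : X → X → ℝ} (hd : Continuous (Function.uncurry d))
    (s : ℝ) :
    IsOpen {p : ProbabilityMeasure X × X | p.2 ∈ largeBallSet d (p.1 : Measure X) s} := by
  have heq : {p : ProbabilityMeasure X × X | p.2 ∈ largeBallSet d (p.1 : Measure X) s} =
      ⋃ ε ∈ Ioo 0 s, {p | ENNReal.ofReal (ε ^ s) < (p.1 : Measure X) {y | d p.2 y < ε}} := by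
    ext p
    simp only [largeBallSet, mem_iUnion, mem_ofPred_eq, exists_prop]
  rw [heq]
  refine isOpen_biUnion fun ε _ => ?_
  exact (lowerSemicontinuous_measure_prodMk_preimage
    (isOpen_lt hd continuous_const)).isOpen_preimage _

theorem isGδ_setOf_ae_lowerLocalDim_eq_zero {d : X → X → ℝ}
    (hd : Continuous (Function.uncurry d)) :
    IsGδ {μ : ProbabilityMeasure X | ∀ᵐ x ∂(μ : Measure X), lowerLocalDim d μ x = 0} := by
  simp only [lowerLocalDim_eq_zero_iff_mem_largeBallSet, ae_all_iff, ofPred_forall]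
  exact .iInter fun k => isGδ_setOf_ae_prodMk_mem (isOpen_setOf_mem_largeBallSet hd _)

end Semicontinuity

section AntidiagonalAverage

theorem exists_tendsto_zero_norm_sub_le_add {E : Type*} [SeminormedAddCommGroup E]
    {g : ℕ × ℕ → E} {C : ℝ} {l : E} (hC : ∀ p, ‖g p‖ ≤ C) (hg : Tendsto g atTop (𝓝 l)) :
    ∃ u : ℕ → ℝ, Tendsto u atTop (𝓝 0) ∧ ∀ p, ‖g p - l‖ ≤ u p.1 + u p.2 := by
  let u (m : ℕ) : ℝ := ⨆ p : ℕ × ℕ, ‖g (p + (m, m)) - l‖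
  have hbdd (m : ℕ) : BddAbove (range fun p : ℕ × ℕ => ‖g (p + (m, m)) - l‖) :=
    ⟨C + ‖l‖, forall_mem_range.2 fun p => (norm_sub_le _ _).trans (by gcongr; exact hC _)⟩
  have hu_nonneg (m : ℕ) : 0 ≤ u m := Real.iSup_nonneg fun _ => norm_nonneg _
  have hle_u {m : ℕ} {p : ℕ × ℕ} (hp : (m, m) ≤ p) : ‖g p - l‖ ≤ u m := by
    simpa only [tsub_add_cancel_of_le hp] using le_ciSup (hbdd m) (p - (m, m))
  refine ⟨u, Metric.tendsto_atTop.2 fun ε hε => ?_, fun p => ?_⟩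
  · obtain ⟨N, hN⟩ := Metric.tendsto_atTop.1 hg (ε / 2) (half_pos hε)
    refine ⟨max N.1 N.2, fun m hm => ?_⟩
    have hNm : N ≤ (m, m) := ⟨(le_max_left _ _).trans hm, (le_max_right _ _).trans hm⟩
    have hum : u m ≤ ε / 2 := ciSup_le fun p => by
      simpa only [dist_eq_norm] using (hN _ (hNm.trans le_add_self)).le
    rw [Real.dist_0_eq_abs, abs_of_nonneg (hu_nonneg m)]
    linarith
  · rcases le_total p.1 p.2 with h | h
    · exact (hle_u (m := p.1) (p := p) ⟨le_rfl, h⟩).trans (le_add_of_nonneg_right (hu_nonneg _))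
    · exact (hle_u (m := p.2) ⟨h, le_rfl⟩).trans (le_add_of_nonneg_left (hu_nonneg _))

theorem tendsto_antidiagonal_average_add {u : ℕ → ℝ} (hu : Tendsto u atTop (𝓝 0)) :
    Tendsto (fun n : ℕ => (n + 1 : ℝ)⁻¹ * ∑ p ∈ antidiagonal n, (u p.1 + u p.2))
      atTop (𝓝 0) := by
  have hcesaro := ((hu.cesaro.comp (tendsto_add_atTop_nat 1)).const_mul 2)
  rw [mul_zero] at hcesaro
  refine hcesaro.congr fun n => ?_
  have hswap : ∑ p ∈ antidiagonal n, u p.2 = ∑ p ∈ antidiagonal n, u p.1 :=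
    Finset.Nat.sum_antidiagonal_swap (f := fun p => u p.1)
  rw [Finset.sum_add_distrib, hswap,
    Finset.Nat.sum_antidiagonal_eq_sum_range_succ_mk (fun p => u p.1), Function.comp_apply]
  push_cast
  ring

theorem tendsto_antidiagonal_average {E : Type*} [SeminormedAddCommGroup E] [NormedSpace ℝ E]
    {g : ℕ × ℕ → E} {C : ℝ} {l : E} (hC : ∀ p, ‖g p‖ ≤ C) (hg : Tendsto g atTop (𝓝 l)) :
    Tendsto (fun n : ℕ => (n + 1 : ℝ)⁻¹ • ∑ p ∈ antidiagonal n, g p) atTop (𝓝 l) := by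
  obtain ⟨u, hu, hgu⟩ := exists_tendsto_zero_norm_sub_le_add hC hg
  refine tendsto_iff_norm_sub_tendsto_zero.2
    (squeeze_zero (fun _ => norm_nonneg _) (fun n => ?_) (tendsto_antidiagonal_average_add hu))
  have hcenter : (n + 1 : ℝ)⁻¹ • ∑ p ∈ antidiagonal n, g p - l =
      (n + 1 : ℝ)⁻¹ • ∑ p ∈ antidiagonal n, (g p - l) := by
    rw [Finset.sum_sub_distrib, Finset.sum_const, Finset.Nat.card_antidiagonal, smul_sub,
      ← Nat.cast_smul_eq_nsmul ℝ, Nat.cast_succ, inv_smul_smul₀ (by positivity)]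
  rw [hcenter, norm_smul, Real.norm_of_nonneg (by positivity)]
  gcongr
  exact norm_sum_le_of_le _ fun p _ => hgu p

end AntidiagonalAverage

section PeriodicCoding

variable {α β : Type*}

theorem iterate_fullShift_apply (k : ℕ) (x : ℤ → α) (i : ℤ) : fullShift^[k] x i = x (i - k) := by
  induction k generalizing i with
  | zero => simp
  | succ k ih =>
    rw [Function.iterate_succ_apply', fullShift, ih]
    push_cast
    ring_nf

/-- The periodic sequence that repeats the window `[-p.1, p.2]` of `x`, with `φ` applied to each
letter. -/
def periodicCoding (φ : α → β) (p : ℕ × ℕ) (x : ℤ → α) : ℤ → β :=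
  fun i => φ (x ((i + p.1) % (p.1 + p.2 + 1) - p.1))

theorem periodicCoding_apply_of_mem_Icc (φ : α → β) {p : ℕ × ℕ} (x : ℤ → α) {i : ℤ}
    (hi : i ∈ Icc (-p.1 : ℤ) p.2) : periodicCoding φ p x i = φ (x i) := by
  rw [periodicCoding, Int.emod_eq_of_lt (by linarith [hi.1]) (by linarith [hi.2]),
    add_sub_cancel_right]

theorem fullShift_periodicCoding_succ (φ : α → β) (a b : ℕ) (x : ℤ → α) :
    fullShift (periodicCoding φ (a + 1, b) x) = periodicCoding φ (a, b + 1) (fullShift x) := by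
  funext i
  simp only [fullShift, periodicCoding]
  push_cast
  ring_nf

theorem fullShift_periodicCoding_zero (φ : α → β) (n : ℕ) (x : ℤ → α) :
    fullShift (periodicCoding φ (0, n) (fullShift^[n] x)) = periodicCoding φ (n, 0) x := by
  funext i
  have hmod : (i - 1) % ((n : ℤ) + 1) = (i + n) % (n + 1) := by
    rw [← Int.add_emod_right]
    ring_nf
  simp [fullShift, periodicCoding, iterate_fullShift_apply, hmod]

theorem countable_range_periodicCoding {φ : α → β} (hφ : (range φ).Countable) (p : ℕ × ℕ) :
    (range (periodicCoding φ p)).Countable := by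
  have := hφ.to_subtype
  -- A sequence of period `N` is determined by a function on `ZMod N`.
  let unroll (w : ZMod (p.1 + p.2 + 1) → range φ) : ℤ → β := fun i => w ((i + p.1 : ℤ) : ZMod _)
  refine (countable_range unroll).mono (range_subset_iff.2 fun x => ?_)
  refine ⟨fun z => ⟨φ (x (z.val - p.1)), mem_range_self _⟩, ?_⟩
  funext i
  simp only [unroll, periodicCoding, ZMod.val_intCast]
  push_cast
  rfl

theorem tendsto_periodicCoding [TopologicalSpace α] {q : ℕ → α → α}
    (hq : ∀ t, Tendsto (fun n => q n t) atTop (𝓝 t)) (x : ℤ → α) :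
    Tendsto (fun p : ℕ × ℕ => periodicCoding (q (p.1 + p.2)) p x) atTop (𝓝 x) := by
  refine tendsto_pi_nhds.2 fun i => ?_
  have hsum : Tendsto (fun p : ℕ × ℕ => p.1 + p.2) atTop atTop :=
    tendsto_atTop_mono (fun p => Nat.le_add_right p.1 p.2)
      (by rw [← prod_atTop_atTop_eq]; exact tendsto_fst)
  refine ((hq (x i)).comp hsum).congr' ?_
  filter_upwards [eventually_ge_atTop (i.natAbs, i.natAbs)] with p ⟨hp₁, hp₂⟩
  exact (periodicCoding_apply_of_mem_Icc _ x ⟨by dsimp at hp₁; omega, by dsimp at hp₂; omega⟩).symm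

variable [MeasurableSpace α] [MeasurableSpace β]

theorem measurable_fullShift : Measurable (fullShift : (ℤ → α) → ℤ → α) :=
  measurable_pi_lambda _ fun i => measurable_pi_apply (i - 1)

theorem measurable_periodicCoding {φ : α → β} (hφ : Measurable φ) (p : ℕ × ℕ) :
    Measurable (periodicCoding φ p) :=
  measurable_pi_lambda _ fun _ => hφ.comp (measurable_pi_apply _)

end PeriodicCoding

section PeriodicAverage

variable {α β : Type*} [MeasurableSpace α] [MeasurableSpace β]

/-- The average of the laws of the periodic codings of a `μ`-random sequence over the `n + 1`
windows of length `n + 1` containing the origin. -/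
noncomputable def periodicAverage (φ : α → β) (μ : Measure (ℤ → α)) (n : ℕ) : Measure (ℤ → β) :=
  (n + 1 : ℝ≥0∞)⁻¹ • ∑ p ∈ antidiagonal n, μ.map (periodicCoding φ p)

variable {φ : α → β} {μ : Measure (ℤ → α)}

theorem isProbabilityMeasure_periodicAverage [IsProbabilityMeasure μ] (hφ : Measurable φ) (n : ℕ) :
    IsProbabilityMeasure (periodicAverage φ μ n) := by
  have hmass (p : ℕ × ℕ) : μ.map (periodicCoding φ p) univ = 1 := by
    rw [Measure.map_apply (measurable_periodicCoding hφ p) .univ, preimage_univ, measure_univ]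
  constructor
  rw [periodicAverage, Measure.smul_apply, Measure.finsetSum_apply]
  simp only [hmass, Finset.sum_const, Finset.Nat.card_antidiagonal, nsmul_eq_mul, mul_one,
    smul_eq_mul, Nat.cast_succ]
  exact ENNReal.inv_mul_cancel (by simp) (by finiteness)

theorem map_fullShift_map_periodicCoding_succ (hφ : Measurable φ)
    (hμ : MeasurePreserving fullShift μ μ) (a b : ℕ) :
    (μ.map (periodicCoding φ (a + 1, b))).map fullShift = μ.map (periodicCoding φ (a, b + 1)) := by
  have hcomm : fullShift ∘ periodicCoding φ (a + 1, b) = periodicCoding φ (a, b + 1) ∘ fullShift :=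
    funext (fullShift_periodicCoding_succ φ a b)
  rw [Measure.map_map measurable_fullShift (measurable_periodicCoding hφ _), hcomm,
    ← Measure.map_map (measurable_periodicCoding hφ _) measurable_fullShift, hμ.map_eq]

theorem map_fullShift_map_periodicCoding_zero (hφ : Measurable φ)
    (hμ : MeasurePreserving fullShift μ μ) (n : ℕ) :
    (μ.map (periodicCoding φ (0, n))).map fullShift = μ.map (periodicCoding φ (n, 0)) := by
  have hcomm : (fullShift ∘ periodicCoding φ (0, n)) ∘ fullShift^[n] = periodicCoding φ (n, 0) :=
    funext (fullShift_periodicCoding_zero φ n)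
  have hmeas := measurable_fullShift.comp (measurable_periodicCoding hφ (0, n))
  rw [Measure.map_map measurable_fullShift (measurable_periodicCoding hφ _), ← hcomm,
    ← Measure.map_map hmeas (hμ.iterate n).measurable, (hμ.iterate n).map_eq]

theorem map_fullShift_periodicAverage (hφ : Measurable φ) (hμ : MeasurePreserving fullShift μ μ)
    (n : ℕ) : (periodicAverage φ μ n).map fullShift = periodicAverage φ μ n := by
  have hzero := map_fullShift_map_periodicCoding_zero hφ hμ n
  rw [periodicAverage, Measure.map_smul,
    ← Measure.mapₗ_apply_of_measurable measurable_fullShift, map_sum]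
  simp only [Measure.mapₗ_apply_of_measurable measurable_fullShift]
  cases n with
  | zero => simp only [Finset.Nat.antidiagonal_zero, Finset.sum_singleton, hzero]
  | succ n =>
    rw [Finset.Nat.sum_antidiagonal_succ, Finset.Nat.sum_antidiagonal_succ', hzero]
    simp only [map_fullShift_map_periodicCoding_succ hφ hμ]

theorem exists_countable_ae_periodicAverage [MeasurableSingletonClass (ℤ → β)]
    (hφ : Measurable φ) (hφc : (range φ).Countable) (n : ℕ) :
    ∃ S : Set (ℤ → β), S.Countable ∧ ∀ᵐ x ∂periodicAverage φ μ n, x ∈ S := by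
  have hS : (⋃ p, range (periodicCoding φ p)).Countable :=
    countable_iUnion fun p => countable_range_periodicCoding hφc p
  have hmeas : MeasurableSet {x | x ∈ ⋃ p, range (periodicCoding φ p)} := hS.measurableSet
  refine ⟨_, hS, ?_⟩
  unfold periodicAverage
  refine Measure.ae_smul_measure ?_ _
  rw [← Measure.sum_coe_finset, Measure.ae_sum_iff' hmeas]
  intro p
  rw [ae_map_iff (measurable_periodicCoding hφ _).aemeasurable hmeas]
  exact ae_of_all _ fun x => mem_iUnion_of_mem _ (mem_range_self x)

variable [TopologicalSpace β] [OpensMeasurableSpace (ℤ → β)]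

theorem integral_periodicAverage [IsFiniteMeasure μ] (hφ : Measurable φ) (n : ℕ)
    (f : BoundedContinuousFunction (ℤ → β) ℝ) :
    ∫ x, f x ∂periodicAverage φ μ n =
      (n + 1 : ℝ)⁻¹ • ∑ p ∈ antidiagonal n, ∫ x, f (periodicCoding φ p x) ∂μ := by
  have hscalar : ((n + 1 : ℝ≥0∞)⁻¹).toReal = (n + 1 : ℝ)⁻¹ := by
    rw [ENNReal.toReal_inv]; norm_cast
  rw [periodicAverage, integral_smul_measure, hscalar,
    integral_finsetSum_measure fun p _ => f.integrable _]
  simp only [integral_map (measurable_periodicCoding hφ _).aemeasurable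
    f.continuous.measurable.aestronglyMeasurable]

theorem tendsto_integral_periodicCoding [TopologicalSpace α] [OpensMeasurableSpace (ℤ → α)]
    [IsFiniteMeasure μ] {q : ℕ → α → α} (hqm : ∀ n, Measurable (q n))
    (hq : ∀ t, Tendsto (fun n => q n t) atTop (𝓝 t)) (f : BoundedContinuousFunction (ℤ → α) ℝ) :
    Tendsto (fun p : ℕ × ℕ => ∫ x, f (periodicCoding (q (p.1 + p.2)) p x) ∂μ) atTop
      (𝓝 (∫ x, f x ∂μ)) := by
  refine tendsto_integral_filter_of_dominated_convergence (fun _ => ‖f‖)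
    (.of_forall fun p => ?_) (.of_forall fun p => ae_of_all _ fun x => f.norm_coe_le_norm _)
    (integrable_const _) (ae_of_all _ fun x => ?_)
  · exact (f.continuous.measurable.comp
      (measurable_periodicCoding (hqm _) p)).aestronglyMeasurable
  · exact (f.continuous.tendsto x).comp (tendsto_periodicCoding hq x)

theorem tendsto_integral_periodicAverage [TopologicalSpace α] [OpensMeasurableSpace (ℤ → α)]
    [IsProbabilityMeasure μ] {q : ℕ → α → α} (hqm : ∀ n, Measurable (q n))
    (hq : ∀ t, Tendsto (fun n => q n t) atTop (𝓝 t)) (f : BoundedContinuousFunction (ℤ → α) ℝ) :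
    Tendsto (fun n => ∫ x, f x ∂periodicAverage (q n) μ n) atTop (𝓝 (∫ x, f x ∂μ)) := by
  simp only [integral_periodicAverage (hqm _)]
  have hbound (p : ℕ × ℕ) : ‖∫ x, f (periodicCoding (q (p.1 + p.2)) p x) ∂μ‖ ≤ ‖f‖ := by
    simpa using norm_integral_le_of_norm_le_const (μ := μ)
      (ae_of_all _ fun x => f.norm_coe_le_norm (periodicCoding (q (p.1 + p.2)) p x))
  refine (tendsto_antidiagonal_average hbound (tendsto_integral_periodicCoding hqm hq f)).congr
    fun n => ?_
  refine congrArg _ (Finset.sum_congr rfl fun p hp => ?_)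
  rw [mem_antidiagonal.1 hp]

end PeriodicAverage

section Density

variable {M : Type*} [TopologicalSpace M] [SecondCountableTopology M] [MeasurableSpace M]
  [OpensMeasurableSpace M]

theorem exists_tendsto_id_countable_range [TopologicalSpace.PseudoMetrizableSpace M] [Nonempty M] :
    ∃ q : ℕ → M → M, (∀ n, Measurable (q n)) ∧ (∀ n, (range (q n)).Countable) ∧
      ∀ t, Tendsto (fun n => q n t) atTop (𝓝 t) := by
  let := TopologicalSpace.pseudoMetrizableSpacePseudoMetric M
  let q := SimpleFunc.approxOn id measurable_id univ (Classical.arbitrary M) (mem_univ _)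
  exact ⟨fun n => q n, fun n => (q n).measurable, fun n => (q n).finite_range.countable,
    fun t => SimpleFunc.tendsto_approxOn measurable_id _ (by simp)⟩

theorem dense_setOf_exists_countable_ae_mem [TopologicalSpace.MetrizableSpace M] :
    Dense {μ : {ν : ProbabilityMeasure (ℤ → M) // ν.toMeasure.map fullShift = ν.toMeasure} |
      ∃ S : Set (ℤ → M), S.Countable ∧ ∀ᵐ x ∂μ.1.toMeasure, x ∈ S} := by
  rintro ⟨μ, hμ⟩
  have hpres : MeasurePreserving fullShift μ.toMeasure μ.toMeasure := ⟨measurable_fullShift, hμ⟩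
  have : Nonempty M := μ.nonempty.map (· 0)
  obtain ⟨q, hqm, hqc, hq⟩ := exists_tendsto_id_countable_range (M := M)
  let ν (n : ℕ) : {ν : ProbabilityMeasure (ℤ → M) // ν.toMeasure.map fullShift = ν.toMeasure} :=
    ⟨⟨periodicAverage (q n) μ.toMeasure n, isProbabilityMeasure_periodicAverage (hqm n) n⟩,
      map_fullShift_periodicAverage (hqm n) hpres n⟩
  refine mem_closure_of_tendsto (f := ν) (b := atTop) ?_
    (.of_forall fun n => exists_countable_ae_periodicAverage (hqm n) (hqc n) n)
  rw [tendsto_subtype_rng, ProbabilityMeasure.tendsto_iff_forall_integral_tendsto]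
  exact tendsto_integral_periodicAverage hqm hq

end Density

theorem fullShift_hausdorffDimZero_denseGδ_general {M : Type*} [TopologicalSpace M]
    [TopologicalSpace.MetrizableSpace M] [SecondCountableTopology M] [MeasurableSpace M]
    [OpensMeasurableSpace M] {d : (ℤ → M) → (ℤ → M) → ℝ} (hd : Continuous (Function.uncurry d))
    (hd_self : ∀ x, d x x = 0) :
    IsGδ {μ : {ν : ProbabilityMeasure (ℤ → M) // ν.toMeasure.map fullShift = ν.toMeasure} |
        ∀ᵐ x ∂μ.1.toMeasure, lowerLocalDim d μ.1.toMeasure x = 0} ∧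
    Dense {μ : {ν : ProbabilityMeasure (ℤ → M) // ν.toMeasure.map fullShift = ν.toMeasure} |
        ∀ᵐ x ∂μ.1.toMeasure, lowerLocalDim d μ.1.toMeasure x = 0} :=
  ⟨(isGδ_setOf_ae_lowerLocalDim_eq_zero hd).preimage continuous_subtype_val,
    dense_setOf_exists_countable_ae_mem.mono (by
      rintro μ ⟨S, hS, hμS⟩
      exact ae_lowerLocalDim_eq_zero_of_countable hd_self hS hμS)⟩

/-- For the full shift on `ℤ → M` over a perfect Polish metric space `M`,
the set `HD` of invariant measures whose lower local dimension vanishes almost everywhere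
(equivalently, with Hausdorff dimension zero) is a dense `Gδ` subset of `M(T)`. -/
theorem fullShift_hausdorffDimZero_denseGδ {M : Type*} [MetricSpace M] [CompleteSpace M]
    [TopologicalSpace.SeparableSpace M] [PerfectSpace M]
    [MeasurableSpace M] [BorelSpace M] :
    IsGδ {μ : {ν : ProbabilityMeasure (ℤ → M) // ν.toMeasure.map fullShift = ν.toMeasure} |
        ∀ᵐ x ∂μ.1.toMeasure, lowerLocalDim shiftDist μ.1.toMeasure x = 0} ∧
    Dense {μ : {ν : ProbabilityMeasure (ℤ → M) // ν.toMeasure.map fullShift = ν.toMeasure} |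
        ∀ᵐ x ∂μ.1.toMeasure, lowerLocalDim shiftDist μ.1.toMeasure x = 0} := by
  have : SecondCountableTopology M := UniformSpace.secondCountable_of_separable M
  exact fullShift_hausdorffDimZero_denseGδ_general continuous_uncurry_shiftDist shiftDist_self
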